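/- Let E be an embanked state such that N(E) = E[i] for some i ∈ [0, ℓ(E)], and suppose N(E) is weakly embanked. Write h(E) = (h_1, h_2). Then N(E) is embanked, and N(N(E)) = N(E)[ν_2(h_1)] if i = 0, N(N(E)) = N(E)[ν_2(h_2 + 1) + 1] if i = 1, and N(N(E)) = N(E)[i − 2] if i ≥ 2. -/

import Mathlib

/-!
One full round of rules from an embanked state can be read off from the integer `n(S)`.  An
Increment rule changes `n` by `σ` (`gray_step`, `inc_step`), and the entry it increases is `a_j`
with `j = ν₂(m) + 1`, where `m` is the larger of the two values of `n`; `a_0` drops by one.  Hence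
along a run of Increments `a_j - σ · w j n` is constant, where `w j n` counts the `m ≤ n` with
`ν₂(m) + 1 = j` (and `w 0 n = -n`).  Halve replaces `n` by `⌊n/2⌋`, shifts the entries and flips
`σ`; Zero starts at `n = 2^ℓ - 1` with `σ = -1`.

So from `E` the value `n` falls from `2^ℓ - 1` to `s₁ = 2h₁ + 1`, where `a_0 = -1`, climbs from
`h₁` to `s₂ = 2h₂`, and falls from `h₂` to `0`.  The two stopping conditions `a_0 = -1` determine
`h₁` and `h₂` from the entries after Zero, and the entries of `N(E)` are then explicit sums of
values of `w`; this is `TwoHalves.profile` together with `final_state`.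

Raising `a_i` by two changes these data very little (`Profile.compare`): for `i ≥ 2` the values
`h₁, h₂` are the same and only the entry `i - 2` two halvings later changes; for `i = 1`, `h₂`
grows by one; for `i = 0`, `h₁` drops by one and `h₂` is unchanged.  In each case telescoping `w`
over the one or two values of `n` involved gives a change of two in a single entry.  That the last
descent reaches `n = 0` without a third Halve follows from `a_0(N(E)) ≥ 0`, itself forced by
`N(E)` being weakly embanked.  The result does not halt because the two leftmost entries of
`N(E)` are nonnegative and not both zero.
-/

open scoped Classical

namespace Skelet17

/-- The five kinds of transition rules. -/
inductive Rule
  | overflow | halt | zero | halve | increment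
  deriving DecidableEq

/-- A state `(a_ℓ, …, a_1, a_0)` (written left to right, `a_0` rightmost) is stored
as the list `[a_0, a_1, …, a_ℓ]`, i.e. with the *rightmost* entry first. -/
abbrev State := List ℤ

/-- The leftmost entry `a_ℓ` of a state. -/
def leftmost (S : State) : ℤ := S.getLastD 0

/-- The entry `a_i(S)`. -/
def entry (S : State) (i : ℕ) : ℤ := S.getD i 0

/-- `ℓ(S) = |S| - 1`. -/
def ell (S : State) : ℕ := S.length - 1

/-- The Overflow rule applies: the leftmost entry is odd and all other entries are even. -/
def OverflowCond (S : State) : Prop := Odd (leftmost S) ∧ ∀ x ∈ S.dropLast, Even x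

/-- The Halt rule applies: all entries are even and the two leftmost entries are `0`. -/
def HaltCond (S : State) : Prop :=
  (∀ x ∈ S, Even x) ∧ S.getLastD 1 = 0 ∧ S.dropLast.getLastD 1 = 0

/-- The Zero rule applies: all entries are even and the Halt rule does not apply. -/
def ZeroCond (S : State) : Prop := (∀ x ∈ S, Even x) ∧ ¬ HaltCond S

/-- The Halve rule applies: `a_0 = -1` and none of the earlier rules applies. -/
def HalveCond (S : State) : Prop :=
  ¬ OverflowCond S ∧ ¬ HaltCond S ∧ ¬ ZeroCond S ∧ S.headD 0 = -1

/-- The rule applied to a state (the first matching rule). -/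
noncomputable def ruleOf (S : State) : Rule :=
  if OverflowCond S then .overflow
  else if HaltCond S then .halt
  else if ZeroCond S then .zero
  else if S.headD 0 = -1 then .halve
  else .increment

/-- The transition function `P`.  (On a Halt state the process stops; we set `P S = S` there.)
Recall the list stores `a_0` first, so e.g. the Overflow rule
`(2a_ℓ+1, 2a_{ℓ-1}, …, 2a_0) ↦ (0, 2a_ℓ+2, 2a_{ℓ-1}, …, 2a_0)` appends a `0` at the end of
the list and adds `1` to the previously last element. -/
noncomputable def P (S : State) : State :=
  match ruleOf S with
  | .overflow => S.dropLast ++ [leftmost S + 1, 0]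
  | .halt => S
  | .zero => (S.set 0 (S.headD 0 - 1)).set (S.length - 1) (leftmost S + 1) ++ [0, 0]
  | .halve => S.tail
  | .increment =>
      let i := S.findIdx (fun x => x % 2 != 0)   -- index of the rightmost odd entry
      (S.set (i + 1) (S.getD (i + 1) 0 + 1)).set 0 (S.headD 0 - 1)

/-- `S ↦ T` : some iterate of `P` sends `S` to `T`. -/
def Reaches (S T : State) : Prop := ∃ m : ℕ, P^[m] S = T

/-- `σ(S) = +1` if the sum of the entries is odd, `-1` if it is even. -/
noncomputable def sigma (S : State) : ℤ := if Odd S.sum then 1 else -1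

/-- `n(S)`: the natural number whose Gray code digits (least significant first) are
`a_1 mod 2, a_2 mod 2, …, a_ℓ mod 2`.  Equivalently (standard Gray-code decoding),
bit `i` of `n(S)` is the parity of `a_{i+1} + ⋯ + a_ℓ`. -/
def nOf (S : State) : ℕ :=
  ∑ i ∈ Finset.range (ell S),
    2 ^ i * ((∑ j ∈ Finset.Icc (i + 1) (ell S), entry S j) % 2).toNat

/-- `⟨a / 2^j⟩` : the nearest integer to `a / 2^j`, rounding half-integers up. -/
def nearest (j a : ℕ) : ℕ := (2 * a + 2 ^ j) / 2 ^ (j + 1)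

/-- `d_j(a, b) = |⟨a/2^j⟩ - ⟨b/2^j⟩|`. -/
def dd (j a b : ℕ) : ℕ := Nat.dist (nearest j a) (nearest j b)

/-- `S_k = (0, 2, 2^2, …, 2^{2k}, 0)`. -/
def Sk (k : ℕ) : State :=
  0 :: (((List.range (2 * k)).map fun i => (2 : ℤ) ^ (2 * k - i)) ++ [0])

/-- An empty state: `n(E) = 0`, `σ(E) = -1`, and the next rule applied is not Halt. -/
def IsEmptyState (E : State) : Prop :=
  E ≠ [] ∧ nOf E = 0 ∧ sigma E = -1 ∧ ruleOf E ≠ Rule.halt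

/-- `m` is the first positive time at which the trajectory of `E` is at an empty state. -/
def NextEmptyAt (E : State) (m : ℕ) : Prop :=
  0 < m ∧ IsEmptyState (P^[m] E) ∧ ∀ t, 0 < t → t < m → ¬ IsEmptyState (P^[t] E)

/-- `N(E)` : the next empty state after `E` (junk value `[]` if it does not exist). -/
noncomputable def N (E : State) : State :=
  if h : ∃ m, NextEmptyAt E m then P^[h.choose] E else []

/-- The rule applied at time `j` belongs to `T_E`, the sequence of rules from `E` to the
next empty state after `E` (all rules after `E` when no next empty state exists). -/
def InTE (E : State) (j : ℕ) : Prop := ∀ t, 0 < t → t ≤ j → ¬ IsEmptyState (P^[t] E)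

/-- Weakly embanked: `T_E` consists of one Zero rule at the start and contains at least two
Halve rules, and all other rules before the second Halve rule are Increment rules. -/
def WeaklyEmbanked (E : State) : Prop :=
  IsEmptyState E ∧
  ∃ j₁ j₂, 0 < j₁ ∧ j₁ < j₂ ∧ InTE E j₂ ∧
    ruleOf (P^[j₁] E) = Rule.halve ∧ ruleOf (P^[j₂] E) = Rule.halve ∧
    ∀ t, 0 < t → t < j₂ → t ≠ j₁ → ruleOf (P^[t] E) = Rule.increment

/-- Embanked: the next empty state `N(E)` exists and the non-Increment rules of `T_E` consist
of exactly one Zero rule at the start and exactly two Halve rules elsewhere. -/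
def Embanked (E : State) : Prop :=
  IsEmptyState E ∧
  ∃ m j₁ j₂, NextEmptyAt E m ∧ 0 < j₁ ∧ j₁ < j₂ ∧ j₂ < m ∧
    ruleOf (P^[j₁] E) = Rule.halve ∧ ruleOf (P^[j₂] E) = Rule.halve ∧
    ∀ t, 0 < t → t < m → t ≠ j₁ → t ≠ j₂ → ruleOf (P^[t] E) = Rule.increment

/-- `h_i(E)` (`i ∈ {1,2}`): the value of `n` at the state immediately *after* the `i`-th
Halve rule applied after `E`. -/
noncomputable def hVal (E : State) (i : ℕ) : ℕ :=
  nOf (P^[Nat.nth (fun j => ruleOf (P^[j] E) = Rule.halve) (i - 1) + 1] E)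

/-- `s_i(E)` (`i ∈ {1,2}`): the value of `n` at the state immediately *before* the `i`-th
Halve rule applied after `E`. -/
noncomputable def sVal (E : State) (i : ℕ) : ℕ :=
  nOf (P^[Nat.nth (fun j => ruleOf (P^[j] E) = Rule.halve) (i - 1)] E)

/-- `E[i]` : the state `E` with the entry `a_i` replaced by `a_i + 2`. -/
def bump (E : State) (i : ℕ) : State := E.set i (E.getD i 0 + 2)

/-- `N'(E) = N^{⌈(i+1)/2⌉}(E)` for an embanked state `E` with `N(E) = E[i]`
(junk value `E` if no such `i` exists). -/
noncomputable def N' (E : State) : State :=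
  if h : ∃ i, i < E.length ∧ N E = bump E i then N^[(h.choose + 2) / 2] E else E

/-- A rooted embanked state: an embanked state obtained from `S_k` by applying `N'`
some number of times. -/
def RootedEmbanked (k : ℕ) (E : State) : Prop :=
  Embanked E ∧ ∃ e : ℕ, N'^[e] (Sk k) = E

/-- `κ_{E→E'}(j)` : the number of steps `S ↦ N(S)` with `N(S) = S[j]` along the chain
`E, N(E), N²(E), …, N^[t](E) = E'`. -/
noncomputable def kappa (E : State) (t j : ℕ) : ℕ :=
  ((Finset.range t).filter fun s => N (N^[s] E) = bump (N^[s] E) j).card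


/-! ### Parities and the Gray-code value -/

/-- The parity of an integer, as a natural number `0` or `1`. -/
def par (z : ℤ) : ℕ := (z % 2).toNat

lemma par_odd {z : ℤ} (h : Odd z) : par z = 1 := by
  have := Int.odd_iff.mp h
  simp [par, this]

lemma par_even {z : ℤ} (h : Even z) : par z = 0 := by
  have := Int.even_iff.mp h
  simp [par, this]

lemma par_le (z : ℤ) : par z ≤ 1 := by
  rcases Int.even_or_odd z with h | h
  · simp [par_even h]
  · simp [par_odd h]

lemma sum_drop_eq (S : State) (k : ℕ) :
    (S.drop k).sum = ∑ j ∈ Finset.Ico k S.length, S.getD j 0 := by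
  induction S generalizing k with
  | nil => simp
  | cons x T ih =>
    cases k with
    | zero =>
      have := ih 0
      simp only [List.drop_zero] at this
      rw [List.drop_zero, List.sum_cons, this, List.length_cons, Nat.Ico_zero_eq_range,
        Nat.Ico_zero_eq_range, Finset.sum_range_succ']
      simp [add_comm]
    | succ k =>
      rw [List.drop_succ_cons, ih k, List.length_cons, ← Finset.sum_Ico_add']
      simp

lemma nOf_eq (S : State) :
    nOf S = ∑ i ∈ Finset.range (ell S), 2 ^ i * par ((S.drop (i + 1)).sum) := by
  unfold nOf
  refine Finset.sum_congr rfl fun i hi => ?_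
  have hi' := Finset.mem_range.mp hi
  unfold ell at hi'
  have : Finset.Icc (i + 1) (ell S) = Finset.Ico (i + 1) S.length := by
    ext j
    simp only [Finset.mem_Icc, Finset.mem_Ico, ell]
    omega
  rw [this, sum_drop_eq]
  rfl

lemma nOf_nil : nOf [] = 0 := by simp [nOf_eq, ell]

/-- Prepending an entry `a_0` shifts the Gray-code digits by one place; the new lowest binary
digit is the parity of the sum of the old state. -/
lemma nOf_cons (x : ℤ) (T : State) : nOf (x :: T) = 2 * nOf T + par T.sum := by
  cases T with
  | nil => simp [nOf_eq, ell, par]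
  | cons y U =>
    rw [nOf_eq, nOf_eq]
    have h1 : ell (x :: y :: U) = U.length + 1 := by simp [ell]
    have h2 : ell (y :: U) = U.length := by simp [ell]
    rw [h1, h2, Finset.sum_range_succ', Finset.mul_sum]
    congr 1
    · refine Finset.sum_congr rfl fun i _ => ?_
      rw [List.drop_succ_cons, pow_succ]
      ring
    · simp

lemma nOf_lt (S : State) : nOf S < 2 ^ ell S := by
  induction S with
  | nil => simp [nOf_nil]
  | cons x T ih =>
    cases T with
    | nil => simp [nOf_cons, nOf_nil, par]
    | cons y U =>
      have h1 : ell (x :: y :: U) = ell (y :: U) + 1 := by simp [ell]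
      have h3 := par_le (y :: U).sum
      rw [nOf_cons, h1, pow_succ]
      omega

lemma all_even_of_nOf {S : State} (h : nOf S = 0) (hs : Even S.sum) : ∀ x ∈ S, Even x := by
  induction S with
  | nil => simp
  | cons x T ih =>
    rw [nOf_cons] at h
    have hT : Even T.sum := by
      by_contra hc
      rw [par_odd (Int.not_even_iff_odd.mp hc)] at h
      omega
    rw [List.sum_cons] at hs
    have hx : Even x := by
      rw [Int.even_add] at hs
      exact hs.mpr hT
    intro z hz
    rcases List.mem_cons.mp hz with rfl | hz
    · exact hx
    · exact ih (by omega) hT z hz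

lemma sum_even_of_all {S : State} (h : ∀ x ∈ S, Even x) : Even S.sum := by
  induction S with
  | nil => simp
  | cons x T ih =>
    rw [List.sum_cons]
    exact (h x (by simp)).add (ih fun z hz => h z (by simp [hz]))

lemma nOf_of_all_even {S : State} (h : ∀ x ∈ S, Even x) : nOf S = 0 := by
  induction S with
  | nil => exact nOf_nil
  | cons x T ih =>
    have hT : ∀ z ∈ T, Even z := fun z hz => h z (by simp [hz])
    rw [nOf_cons, ih hT, par_even (sum_even_of_all hT)]

lemma sigma_neg {S : State} : sigma S = -1 ↔ Even S.sum := by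
  unfold sigma
  split_ifs with h
  · simp [Int.not_even_iff_odd.mpr h]
  · simp [Int.not_odd_iff_even.mp h]

lemma sigma_pos {S : State} : sigma S = 1 ↔ Odd S.sum := by
  unfold sigma
  split_ifs with h
  · simp [h]
  · simp [h]

/-! ### How often each entry changes while `n` moves -/

/-- The change of the entry `a_j` when an Increment rule moves `n` between `m - 1` and `m`:
`a_0` drops by one, and `a_j` with `j = ν₂(m) + 1` grows by one. -/
def wt (j m : ℕ) : ℤ := if j = 0 then -1 else if padicValNat 2 m + 1 = j then 1 else 0

/-- The total change of the entry `a_j` when Increment rules move `n` between `0` and `n`. -/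
def w (j n : ℕ) : ℤ := ∑ m ∈ Finset.range n, wt j (m + 1)

lemma w_succ (j n : ℕ) : w j (n + 1) = w j n + wt j (n + 1) := Finset.sum_range_succ _ _

@[simp] lemma w_at_zero (j : ℕ) : w j 0 = 0 := by simp [w]

lemma w_zero (n : ℕ) : w 0 n = -n := by
  induction n with
  | zero => simp
  | succ n ih => rw [w_succ, ih, wt]; push_cast; simp; ring

lemma w_mono {j a b : ℕ} (hj : j ≠ 0) (h : a ≤ b) : w j a ≤ w j b := by
  induction b, h using Nat.le_induction with
  | base => rfl
  | succ b _ ih =>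
    rw [w_succ, wt, if_neg hj]
    split_ifs <;> linarith

lemma nu_double {m : ℕ} (hm : m ≠ 0) : padicValNat 2 (2 * m) = padicValNat 2 m + 1 := by
  rw [padicValNat.mul (by norm_num) hm, padicValNat.self (by norm_num), add_comm]

lemma nu_odd (m : ℕ) : padicValNat 2 (2 * m + 1) = 0 :=
  padicValNat.eq_zero_of_not_dvd (by omega)

/-! ### The Increment rule -/

lemma ruleOf_increment {S : State} (h : ruleOf S = .increment) :
    ¬ OverflowCond S ∧ ¬ (∀ x ∈ S, Even x) ∧ S.headD 0 ≠ -1 := by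
  unfold ruleOf at h
  split_ifs at h with h1 h2 h3 h4
  exact ⟨h1, fun hc => h3 ⟨hc, h2⟩, h4⟩

lemma sum_set_succ {S : State} {k : ℕ} (hk : k < S.length) :
    (S.set k (S.getD k 0 + 1)).sum = S.sum + 1 := by
  induction S generalizing k with
  | nil => simp at hk
  | cons x T ih =>
    cases k with
    | zero => simp; ring
    | succ k =>
      simp only [List.length_cons, Nat.add_lt_add_iff_right] at hk
      simp only [List.set_cons_succ, List.sum_cons, List.getD_cons_succ, ih hk]
      ring

/-- Adding one to the entry left of the rightmost odd entry moves the Gray-code value by one,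
upwards if the sum of the entries is odd and downwards if it is even, and the position of the
rightmost odd entry is the 2-adic valuation of the larger of the two values. -/
lemma gray_step (k : ℕ) (S : State) (hk : k + 1 < S.length) (he : ∀ j < k, Even (S.getD j 0))
    (ho : Odd (S.getD k 0)) :
    (Odd S.sum → nOf (S.set (k + 1) (S.getD (k + 1) 0 + 1)) = nOf S + 1 ∧
      padicValNat 2 (nOf S + 1) = k) ∧
    (Even S.sum → nOf S = nOf (S.set (k + 1) (S.getD (k + 1) 0 + 1)) + 1 ∧
      padicValNat 2 (nOf S) = k) := by
  induction k generalizing S with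
  | zero =>
    match S, hk, ho with
    | x :: y :: U, _, ho =>
      simp only [List.getD_cons_zero] at ho
      have e1 : nOf ((x :: y :: U).set (0 + 1) ((x :: y :: U).getD (0 + 1) 0 + 1)) =
          2 * nOf (y :: U) + par ((y :: U).sum + 1) := by
        simp only [zero_add, List.set_cons_succ, List.set_cons_zero, List.getD_cons_succ,
          List.getD_cons_zero]
        rw [nOf_cons x, nOf_cons (y + 1), nOf_cons y]
        congr 2
        simp only [List.sum_cons]; ring
      rw [e1, nOf_cons x, List.sum_cons (a := x)]
      constructor
      · intro h
        have hT : Even (y :: U).sum := by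
          rw [Int.odd_add] at h; exact h.mp ho
        rw [par_even hT, par_odd hT.add_one]
        exact ⟨rfl, nu_odd _⟩
      · intro h
        have hT : Odd (y :: U).sum := by
          by_contra hc
          rw [Int.even_add'] at h; exact hc (h.mp ho)
        rw [par_odd hT, par_even hT.add_one]
        exact ⟨rfl, nu_odd _⟩
  | succ k ih =>
    match S, hk, he, ho with
    | x :: T, hk, he, ho =>
      have hx : Even x := by simpa using he 0 (by omega)
      have hk' : k + 1 < T.length := by simpa using hk
      obtain ⟨i1, i2⟩ := ih T hk' (fun j hj => by simpa using he (j + 1) (by omega))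
        (by simpa using ho)
      have e1 : nOf ((x :: T).set (k + 1 + 1) ((x :: T).getD (k + 1 + 1) 0 + 1)) =
          2 * nOf (T.set (k + 1) (T.getD (k + 1) 0 + 1)) + par (T.sum + 1) := by
        rw [List.set_cons_succ, List.getD_cons_succ, nOf_cons, sum_set_succ hk']
      rw [e1, nOf_cons x, List.sum_cons (a := x)]
      constructor
      · intro h
        have hT : Odd T.sum := by rw [Int.odd_add'] at h; exact h.mpr hx
        obtain ⟨a, b⟩ := i1 hT
        rw [par_odd hT, par_even hT.add_one, a]
        refine ⟨by ring, ?_⟩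
        rw [show 2 * nOf T + 1 + 1 = 2 * (nOf T + 1) by ring, nu_double (by omega), b]
      · intro h
        have hT : Even T.sum := by rw [Int.even_add] at h; exact h.mp hx
        obtain ⟨a, b⟩ := i2 hT
        rw [par_even hT, par_odd hT.add_one]
        refine ⟨by omega, ?_⟩
        rw [add_zero, nu_double (by omega), b]

lemma nOf_set_zero (S : State) (z : ℤ) : nOf (S.set 0 z) = nOf S := by
  cases S with
  | nil => rfl
  | cons x T => rw [List.set_cons_zero, nOf_cons, nOf_cons]

lemma sum_set_zero {S : State} (hS : S ≠ []) (z : ℤ) :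
    (S.set 0 z).sum = S.sum - S.headD 0 + z := by
  cases S with
  | nil => exact absurd rfl hS
  | cons x T => simp; ring

lemma entry_set (S : State) (k j : ℕ) (z : ℤ) (hk : k < S.length) :
    entry (S.set k z) j = if j = k then z else entry S j := by
  unfold entry
  by_cases h : j = k
  · subst h; simp [List.getD_eq_getElem?_getD, hk]
  · have : k ≠ j := fun hc => h hc.symm
    simp [List.getD_eq_getElem?_getD, h, List.getElem?_set_ne this]

/-- An Increment rule moves `n` by `σ`, and the entries change as prescribed by `w`. -/
lemma inc_step {S : State} (h : ruleOf S = .increment) :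
    (P S).length = S.length ∧ sigma (P S) = sigma S ∧
    (nOf (P S) : ℤ) = nOf S + sigma S ∧
    ∀ j, entry (P S) j = entry S j + sigma S * (w j (nOf (P S)) - w j (nOf S)) := by
  obtain ⟨hov, hne, hhd⟩ := ruleOf_increment h
  set k := S.findIdx (fun x => x % 2 != 0) with hkdef
  have hP : P S = (S.set (k + 1) (S.getD (k + 1) 0 + 1)).set 0 (S.headD 0 - 1) := by
    unfold P; rw [h]
  have hk : k < S.length := by
    rw [hkdef, List.findIdx_lt_length]
    push Not at hne
    obtain ⟨x, hx, hx'⟩ := hne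
    refine ⟨x, hx, ?_⟩
    rw [Int.not_even_iff] at hx'
    simp [hx']
  have ho : Odd (S.getD k 0) := by
    have := List.findIdx_getElem (xs := S) (p := fun x => x % 2 != 0) (w := hk)
    rw [List.getD_eq_getElem _ _ hk, Int.odd_iff]
    have h2 : S[k] % 2 ≠ 0 := by simpa using this
    omega
  have he : ∀ j < k, Even (S.getD j 0) := by
    intro j hj
    have := List.not_of_lt_findIdx (xs := S) (p := fun x => x % 2 != 0) (i := j) hj
    rw [List.getD_eq_getElem _ _ (hj.trans hk), Int.even_iff]
    simpa using this
  have hS : S ≠ [] := by rintro rfl; simp at hk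
  -- if the last entry were the rightmost odd one, Overflow would apply
  have hk1 : k + 1 < S.length := by
    by_contra hc
    apply hov
    have hkl : k = S.length - 1 := by omega
    refine ⟨?_, ?_⟩
    · unfold leftmost
      rw [List.getLastD_eq_getLast?, List.getLast?_eq_getElem?, ← hkl,
        ← List.getD_eq_getElem?_getD]
      exact ho
    · intro x hx
      obtain ⟨j, hj, rfl⟩ := List.mem_iff_getElem.mp hx
      rw [List.length_dropLast] at hj
      have := he j (by omega)
      rw [List.getD_eq_getElem _ _ (by omega)] at this
      simpa using this
  have hlen : (S.set (k + 1) (S.getD (k + 1) 0 + 1)).length = S.length := by simp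
  have hsum : (P S).sum = S.sum := by
    rw [hP, sum_set_zero (by intro hc; rw [hc] at hlen; simp at hlen; exact hS (List.length_eq_zero_iff.mp hlen.symm)),
      sum_set_succ hk1]
    cases S with
    | nil => exact absurd rfl hS
    | cons x T => simp
  have hn : nOf (P S) = nOf (S.set (k + 1) (S.getD (k + 1) 0 + 1)) := by
    rw [hP, nOf_set_zero]
  have hent : ∀ j, entry (P S) j =
      entry S j + if j = 0 then -1 else if k + 1 = j then 1 else 0 := by
    intro j
    rw [hP, entry_set _ _ _ _ (by omega), entry_set _ _ _ _ hk1]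
    by_cases hj : j = 0
    · subst hj
      cases S with
      | nil => exact absurd rfl hS
      | cons x T => simp [entry]; ring
    · by_cases hj2 : j = k + 1
      · simp [hj2, entry]
      · have : k + 1 ≠ j := fun hc => hj2 hc.symm
        simp [hj, hj2, this]
  obtain ⟨g1, g2⟩ := gray_step k S hk1 he ho
  have hsig : sigma (P S) = sigma S := by unfold sigma; rw [hsum]
  refine ⟨by rw [hP]; simp, hsig, ?_⟩
  rcases Int.even_or_odd S.sum with hp | hp
  · obtain ⟨a, b⟩ := g2 hp
    rw [← hn] at a
    rw [sigma_neg.mpr hp]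
    refine ⟨by rw [a]; push_cast; ring, fun j => ?_⟩
    rw [hent, ← b, a, w_succ, wt]
    ring
  · obtain ⟨a, b⟩ := g1 hp
    rw [← hn] at a
    rw [sigma_pos.mpr hp]
    refine ⟨by rw [a]; push_cast; ring, fun j => ?_⟩
    rw [hent, ← b, a, w_succ, wt]
    ring

/-- The effect of a run of `t` consecutive Increment rules. -/
lemma inc_run {S : State} (t : ℕ) (h : ∀ s < t, ruleOf (P^[s] S) = .increment) :
    (P^[t] S).length = S.length ∧ sigma (P^[t] S) = sigma S ∧
    (nOf (P^[t] S) : ℤ) = nOf S + sigma S * t ∧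
    ∀ j, entry (P^[t] S) j = entry S j + sigma S * (w j (nOf (P^[t] S)) - w j (nOf S)) := by
  induction t with
  | zero => simp
  | succ t ih =>
    obtain ⟨a, b, c, d⟩ := ih fun s hs => h s (by omega)
    obtain ⟨a', b', c', d'⟩ := inc_step (h t (by omega))
    rw [Function.iterate_succ_apply']
    refine ⟨a'.trans a, b'.trans b, ?_, fun j => ?_⟩
    · rw [c', c, b]; push_cast; ring
    · rw [d', d, b]; ring

/-! ### The Halve and Zero rules -/

lemma halve_step {S : State} (h : ruleOf S = .halve) : ∃ T, S = -1 :: T ∧ P S = T := by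
  have hP : P S = S.tail := by unfold P; rw [h]
  unfold ruleOf at h
  split_ifs at h with h1 h2 h3 h4
  cases S with
  | nil => simp at h4
  | cons x T =>
    simp only [List.headD_cons] at h4
    exact ⟨T, by rw [h4], hP⟩

/-- Halve with `σ = -1`: here `n` is odd. -/
lemma halve_neg {T : State} (h : sigma (-1 :: T) = -1) :
    sigma T = 1 ∧ nOf (-1 :: T) = 2 * nOf T + 1 := by
  rw [sigma_neg, List.sum_cons] at h
  have hT : Odd T.sum := by
    by_contra hc
    rw [Int.even_add'] at h
    exact hc (h.mp (by decide))
  exact ⟨sigma_pos.mpr hT, by rw [nOf_cons, par_odd hT]⟩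

/-- Halve with `σ = 1`: here `n` is even. -/
lemma halve_pos {T : State} (h : sigma (-1 :: T) = 1) :
    sigma T = -1 ∧ nOf (-1 :: T) = 2 * nOf T := by
  rw [sigma_pos, List.sum_cons] at h
  have hT : Even T.sum := by
    rw [Int.odd_add] at h
    exact h.mp (by decide)
  exact ⟨sigma_neg.mpr hT, by rw [nOf_cons, par_even hT, add_zero]⟩

lemma leftmost_even {S : State} (h : ∀ x ∈ S, Even x) : ¬ Odd (leftmost S) := by
  unfold leftmost
  rcases List.eq_nil_or_concat S with rfl | ⟨L, y, rfl⟩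
  · simp
  · simpa [Int.not_odd_iff_even] using h y (by simp)

lemma ruleOf_all_even {S : State} (h : ∀ x ∈ S, Even x) :
    ruleOf S = .halt ∨ ruleOf S = .zero := by
  unfold ruleOf
  rw [if_neg fun hc => leftmost_even h hc.1]
  by_cases hh : HaltCond S
  · simp [hh]
  · rw [if_neg hh, if_pos ⟨h, hh⟩]; simp

lemma empty_all_even {E : State} (h : IsEmptyState E) : ∀ x ∈ E, Even x :=
  all_even_of_nOf h.2.1 (sigma_neg.mp h.2.2.1)

lemma empty_rule {E : State} (h : IsEmptyState E) : ruleOf E = .zero :=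
  (ruleOf_all_even (empty_all_even h)).resolve_left h.2.2.2

lemma empty_not_halt {E : State} (h : IsEmptyState E) : ¬ HaltCond E := by
  intro hc
  apply h.2.2.2
  unfold ruleOf
  rw [if_neg fun ho => leftmost_even (empty_all_even h) ho.1, if_pos hc]

lemma nOf_zero_aux (L : State) (y : ℤ) (hL : ∀ x ∈ L, Even x) (hy : Odd y) :
    nOf (0 :: (L ++ [y, 0, 0])) = 2 ^ (L.length + 1) - 1 := by
  induction L with
  | nil => simp [nOf_cons, nOf_nil, par, Int.odd_iff.mp hy]
  | cons x T ih =>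
    have hT : ∀ z ∈ T, Even z := fun z hz => hL z (by simp [hz])
    have ih := ih hT
    rw [nOf_cons] at ih
    have hsum : Odd ((x :: T) ++ [y, 0, 0]).sum := by
      rw [List.sum_append]
      exact (sum_even_of_all hL).add_odd (by simpa using hy)
    rw [nOf_cons, par_odd hsum, List.cons_append, nOf_cons, ih, List.length_cons, pow_succ]
    have := Nat.one_le_two_pow (n := T.length + 1)
    omega

/-- The Zero rule applied to an empty state with at least two entries. -/
lemma zero_step {E : State} (hE : IsEmptyState E) (hl : 1 ≤ ell E) :
    (P E).length = E.length + 2 ∧ sigma (P E) = -1 ∧ nOf (P E) = 2 ^ ell E - 1 ∧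
    ∀ j, entry (P E) j =
      entry E j + (if j = ell E then 1 else 0) - (if j = 0 then 1 else 0) := by
  have hev := empty_all_even hE
  have hr := empty_rule hE
  obtain ⟨x, L, y, rfl⟩ : ∃ x L y, E = x :: (L ++ [y]) := by
    cases E with
    | nil => simp [ell] at hl
    | cons x T =>
      rcases List.eq_nil_or_concat T with rfl | ⟨L, y, rfl⟩
      · simp [ell] at hl
      · exact ⟨x, L, y, by simp⟩
  have hP : P (x :: (L ++ [y])) = (x - 1) :: (L ++ [y + 1, 0, 0]) := by
    unfold P
    rw [hr]
    have hlm : leftmost (x :: (L ++ [y])) = y := by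
      unfold leftmost
      rw [← List.cons_append, List.getLastD_eq_getLast?, List.getLast?_concat]
      rfl
    simp [hlm]
  have hx : Even x := hev x (by simp)
  have hy : Even y := hev y (by simp)
  have hL : ∀ z ∈ L, Even z := fun z hz => hev z (by simp [hz])
  have hell : ell (x :: (L ++ [y])) = L.length + 1 := by simp [ell]
  rw [hP, hell]
  refine ⟨by simp, ?_, ?_, ?_⟩
  · rw [sigma_neg]
    have h1 := sum_even_of_all hL
    have : ((x - 1) :: (L ++ [y + 1, 0, 0])).sum = x + L.sum + y := by simp; ring
    rw [this]
    exact (hx.add h1).add hy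
  · have := nOf_zero_aux L (y + 1) hL hy.add_one
    rw [nOf_cons] at this ⊢
    exact this
  · intro j
    unfold entry
    cases j with
    | zero => simp
    | succ j =>
      simp only [List.getD_cons_succ]
      rcases lt_trichotomy j L.length with hj | hj | hj
      · rw [List.getD_append _ _ _ _ hj, List.getD_append _ _ _ _ hj]
        have : j ≠ L.length := by omega
        simp [this]
      · subst hj
        rw [List.getD_append_right _ _ _ _ le_rfl, List.getD_append_right _ _ _ _ le_rfl]
        simp
      · rw [List.getD_append_right _ _ _ _ hj.le, List.getD_append_right _ _ _ _ hj.le]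
        obtain ⟨d, rfl⟩ : ∃ d, j = L.length + 1 + d := ⟨j - (L.length + 1), by omega⟩
        have e : L.length + 1 + d - L.length = d + 1 := by omega
        rw [e]
        have : L.length + 1 + d ≠ L.length := by omega
        rcases d with _ | _ | d <;> simp [this]

/-! ### The arithmetic profile of a weakly embanked state -/

/-- The arithmetic of the rules from an empty state `E` with `ℓ(E) = ℓ` through the second
Halve rule: `Z` are the entries after the Zero rule, `H` those after the second Halve rule, and
`(h₁, h₂) = h(E)`.  The value `n` falls from `2^ℓ - 1` to `s₁ = 2h₁ + 1`, is halved, climbs from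
`h₁` to `s₂ = 2h₂`, and is halved again. -/
structure Profile (l : ℕ) (Z : ℕ → ℤ) (h₁ h₂ : ℕ) (H : ℕ → ℤ) : Prop where
  start : -1 ≤ Z 0
  down : 2 * h₁ + 1 ≤ 2 ^ l - 1
  up : h₁ ≤ 2 * h₂
  bound : 2 * h₂ < 2 ^ (l + 1)
  eq0 : Z 0 - (w 0 (2 * h₁ + 1) - w 0 (2 ^ l - 1)) = -1
  eq1 : Z 1 - (w 1 (2 * h₁ + 1) - w 1 (2 ^ l - 1)) + (w 0 (2 * h₂) - w 0 h₁) = -1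
  eqH : ∀ j, H j = Z (j + 2) - (w (j + 2) (2 * h₁ + 1) - w (j + 2) (2 ^ l - 1)) +
    (w (j + 1) (2 * h₂) - w (j + 1) h₁)

/-- `j₁` and `j₂` are the times of the first two Halve rules after `E`, and every other rule up
to time `j₂` except the initial one is an Increment rule. -/
def TwoHalves (E : State) (j₁ j₂ : ℕ) : Prop :=
  0 < j₁ ∧ j₁ < j₂ ∧ ruleOf (P^[j₁] E) = .halve ∧ ruleOf (P^[j₂] E) = .halve ∧
    ∀ t, 0 < t → t < j₂ → t ≠ j₁ → ruleOf (P^[t] E) = .increment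

lemma TwoHalves.profile {E : State} {j₁ j₂ : ℕ} (h : TwoHalves E j₁ j₂) (hE : IsEmptyState E)
    (hl : 1 ≤ ell E) :
    (P^[j₂ + 1] E).length = E.length ∧ sigma (P^[j₂ + 1] E) = -1 ∧
    Profile (ell E) (entry (P E)) (nOf (P^[j₁ + 1] E)) (nOf (P^[j₂ + 1] E))
      (entry (P^[j₂ + 1] E)) := by
  obtain ⟨h0, h12, r1, r2, hinc⟩ := h
  obtain ⟨a, rfl⟩ : ∃ a, j₁ = a + 1 := ⟨j₁ - 1, by omega⟩
  obtain ⟨b, rfl⟩ : ∃ b, j₂ = b + (a + 1 + 1) := ⟨j₂ - (a + 1 + 1), by omega⟩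
  obtain ⟨zl, zs, zn, -⟩ := zero_step hE hl
  obtain ⟨l1, s1, n1, e1⟩ := inc_run (S := P E) a fun s hs => by
    rw [← Function.iterate_succ_apply]
    exact hinc _ (by omega) (by omega) (by omega)
  obtain ⟨T, hT, hPT⟩ := halve_step r1
  have hT' : P^[a] (P E) = -1 :: T := by rw [← Function.iterate_succ_apply, hT]
  have hPT' : P^[a + 1 + 1] E = T := by rw [Function.iterate_succ_apply', hPT]
  obtain ⟨l2, s2, n2, e2⟩ := inc_run (S := T) b fun s hs => by
    rw [← hPT', ← Function.iterate_add_apply]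
    exact hinc _ (by omega) (by omega) (by omega)
  obtain ⟨U, hU, hPU⟩ := halve_step r2
  have hU' : P^[b] T = -1 :: U := by rw [← hU, Function.iterate_add_apply, hPT']
  have hPU' : P^[b + (a + 1 + 1) + 1] E = U := by rw [Function.iterate_succ_apply', hPU]
  rw [hPT', hPU']
  rw [hT'] at l1 s1 n1 e1
  rw [hU'] at l2 s2 n2 e2
  rw [zs] at s1 n1 e1
  obtain ⟨sT, nT⟩ := halve_neg s1
  rw [sT] at s2 n2 e2
  obtain ⟨sU, nU⟩ := halve_pos s2
  rw [nT, zn] at n1 e1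
  rw [nU] at n2 e2
  have eT : ∀ j, entry T j = entry (-1 :: T) (j + 1) := fun j => rfl
  have eU : ∀ j, entry U j = entry (-1 :: U) (j + 1) := fun j => rfl
  have hh1 : entry (-1 :: T) 0 = -1 := rfl
  have hh2 : entry (-1 :: U) 0 = -1 := rfl
  have hlenE : ell E + 1 = E.length := by unfold ell at hl ⊢; omega
  simp only [List.length_cons] at l1 l2
  refine ⟨by omega, sU, ?_⟩
  have f0 := e1 0
  rw [hh1, w_zero, w_zero] at f0
  have f1 := e2 0
  rw [hh2, eT, e1] at f1
  refine ⟨?_, ?_, ?_, ?_, ?_, ?_, ?_⟩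
  · push_cast at f0 n1
    linarith [Int.natCast_nonneg a]
  · omega
  · omega
  · have := nOf_lt (-1 :: U)
    rw [nU] at this
    have e : ell (-1 :: U) = ell E + 1 := by simp only [ell, List.length_cons] at *; omega
    rwa [e] at this
  · rw [w_zero, w_zero]; linarith
  · simp only [zero_add] at f1
    linarith
  · intro j
    rw [eU, e2, eT, e1]
    ring

/-- A one-entry state becomes `[a_0 + 1, 0, 0]` under the Zero rule, with `σ = 1` instead of
`-1`.  After the first Halve rule it has two entries and `n ≤ 1`, and a state with all entries
even is reached before a second Halve rule. -/
lemma TwoHalves.one_le_ell {E : State} {j₁ j₂ : ℕ} (h : TwoHalves E j₁ j₂)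
    (hE : IsEmptyState E) : 1 ≤ ell E := by
  by_contra hl
  obtain ⟨h0, h12, r1, r2, hinc⟩ := h
  obtain ⟨y, rfl⟩ : ∃ y, E = [y] := by
    match E, hE, hl with
    | [], hE, _ => exact absurd rfl hE.1
    | [y], _, _ => exact ⟨y, rfl⟩
    | _ :: _ :: _, _, hl => simp [ell] at hl
  have hy : Even y := empty_all_even hE y (by simp)
  have hP : P [y] = [y + 1, 0, 0] := by
    unfold P
    rw [empty_rule hE]
    simp [leftmost]
  obtain ⟨a, rfl⟩ : ∃ a, j₁ = a + 1 := ⟨j₁ - 1, by omega⟩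
  obtain ⟨l1, s1, n1, e1⟩ := inc_run (S := P [y]) a fun s hs => by
    rw [← Function.iterate_succ_apply]
    exact hinc _ (by omega) (by omega) (by omega)
  obtain ⟨T, hT, hPT⟩ := halve_step r1
  have hT' : P^[a] (P [y]) = -1 :: T := by rw [← Function.iterate_succ_apply, hT]
  have hPT' : P^[a + 1 + 1] [y] = T := by rw [Function.iterate_succ_apply', hPT]
  have hsig : sigma (P [y]) = 1 := by
    rw [hP, sigma_pos]
    simpa using hy.add_one
  have hn0 : nOf (P [y]) = 0 := by simp [hP, nOf_cons, nOf_nil, par]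
  rw [hT', hsig] at s1 e1
  rw [hn0] at e1
  obtain ⟨sT, nT⟩ := halve_pos s1
  have hlt := nOf_lt T
  have hlenT : T.length = 2 := by
    rw [hT', hP] at l1; simpa using l1
  rw [show ell T = 1 by simp [ell, hlenT]] at hlt
  have hodd : ∀ S : State, nOf S = 0 → sigma S = -1 →
      ruleOf S ≠ .increment ∧ ruleOf S ≠ .halve := by
    intro S hS hs
    rcases ruleOf_all_even (all_even_of_nOf hS (sigma_neg.mp hs)) with h | h <;> simp [h]
  rcases Nat.eq_zero_or_pos (nOf T) with hz | hpos
  · obtain ⟨q1, q2⟩ := hodd T hz sT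
    rcases eq_or_ne (a + 1 + 1) j₂ with hj | hj
    · rw [← hj, hPT'] at r2; exact q2 r2
    · exact q1 (by rw [← hPT']; exact hinc _ (by omega) (by omega) (by omega))
  · have hT1 : nOf T = 1 := by omega
    have hh := e1 1
    rw [nT, hT1, hP, w_succ, w_succ] at hh
    have hw1 : wt 1 1 = 1 := by simp [wt]
    have hw2 : wt 1 2 = 0 := by simp [wt]
    have hT0 : entry T 0 = 1 := by
      simpa [entry, hw1, hw2, w] using hh
    rcases eq_or_ne (a + 1 + 1) j₂ with hj | hj
    · rw [← hj, hPT'] at r2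
      obtain ⟨V, hV, -⟩ := halve_step r2
      rw [hV] at hT0
      simp [entry] at hT0
    · have hi : ruleOf T = .increment := by
        rw [← hPT']; exact hinc _ (by omega) (by omega) (by omega)
      obtain ⟨-, b, c, -⟩ := inc_step hi
      rw [sT] at b c
      obtain ⟨q1, q2⟩ := hodd (P T) (by omega) b
      have hPT2 : P^[a + 1 + 1 + 1] [y] = P T := by rw [Function.iterate_succ_apply', hPT']
      rcases eq_or_ne (a + 1 + 1 + 1) j₂ with hj2 | hj2
      · rw [← hj2, hPT2] at r2; exact q2 r2
      · exact q1 (by rw [← hPT2]; exact hinc _ (by omega) (by omega) (by omega))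

/-! ### The values `h(E)` and the next empty state -/

lemma TwoHalves.hVal {E : State} {j₁ j₂ : ℕ} (h : TwoHalves E j₁ j₂) (hE : IsEmptyState E) :
    hVal E 1 = nOf (P^[j₁ + 1] E) ∧ hVal E 2 = nOf (P^[j₂ + 1] E) := by
  obtain ⟨h0, h12, r1, r2, hinc⟩ := h
  have hno : ∀ t < j₂, t ≠ j₁ → ruleOf (P^[t] E) ≠ .halve := by
    intro t ht htne
    rcases Nat.eq_zero_or_pos t with rfl | htp
    · simp [empty_rule hE]
    · simp [hinc t htp ht htne]
  set p : ℕ → Prop := fun j => ruleOf (P^[j] E) = Rule.halve with hp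
  have c1 : Nat.count p j₁ = 0 := by
    rw [Nat.count_eq_card_filter_range, Finset.card_eq_zero, Finset.filter_eq_empty_iff]
    intro t ht
    rw [Finset.mem_range] at ht
    exact hno t (by omega) (by omega)
  have c2 : Nat.count p j₂ = 1 := by
    rw [Nat.count_eq_card_filter_range, Finset.card_eq_one]
    refine ⟨j₁, ?_⟩
    ext t
    simp only [Finset.mem_filter, Finset.mem_range, Finset.mem_singleton]
    constructor
    · rintro ⟨ht, hpt⟩
      by_contra hc
      exact hno t ht hc hpt
    · rintro rfl
      exact ⟨h12, r1⟩
  have n1 : Nat.nth p 0 = j₁ := by rw [← c1]; exact Nat.nth_count r1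
  have n2 : Nat.nth p 1 = j₂ := by rw [← c2]; exact Nat.nth_count r2
  unfold Skelet17.hVal
  exact ⟨by rw [show (1 - 1) = 0 from rfl, n1], by rw [show (2 - 1) = 1 from rfl, n2]⟩

lemma N_eq {E : State} {m : ℕ} (h : NextEmptyAt E m) : N E = P^[m] E := by
  have hex : ∃ m, NextEmptyAt E m := ⟨m, h⟩
  unfold N
  rw [dif_pos hex]
  have hc := hex.choose_spec
  congr 1
  rcases lt_trichotomy hex.choose m with hlt | heq | hgt
  · exact absurd hc.2.1 (h.2.2 _ hc.1 hlt)
  · rw [heq]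
  · exact absurd h.2.1 (hc.2.2 _ h.1 hgt)

lemma increment_of_neg {S : State} (hs : sigma S = -1) (hn : nOf S ≠ 0)
    (h0 : entry S 0 ≠ -1) : ruleOf S = .increment := by
  have hodd : ¬ ∀ x ∈ S, Even x := fun hc => hn (nOf_of_all_even hc)
  have hov : ¬ OverflowCond S := by
    rintro ⟨a, b⟩
    rcases List.eq_nil_or_concat S with rfl | ⟨L, y, rfl⟩
    · exact hn nOf_nil
    · have h1 : Odd y := by simpa [leftmost] using a
      have h2 : Even L.sum := sum_even_of_all (by simpa using b)
      rw [sigma_neg] at hs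
      have h3 : Odd (L ++ [y]).sum := by simpa using h2.add_odd h1
      rw [List.concat_eq_append] at hs
      exact Int.not_even_iff_odd.mpr h3 hs
  have hhd : S.headD 0 ≠ -1 := by
    cases S with
    | nil => simp
    | cons x T => simpa [entry] using h0
  unfold ruleOf
  rw [if_neg hov, if_neg fun hc => hodd hc.1, if_neg fun hc => hodd hc.1, if_neg hhd]

/-- Once `σ = -1` and `a_0 ≥ n`, Increment rules bring `n` down to `0` before `a_0` is
exhausted. -/
lemma final_run {S : State} (hs : sigma S = -1) (h0 : (nOf S : ℤ) ≤ entry S 0) :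
    ∀ t < nOf S, ruleOf (P^[t] S) = .increment ∧ nOf (P^[t] S) ≠ 0 := by
  intro t
  induction t using Nat.strong_induction_on with
  | _ t ih =>
    intro ht
    obtain ⟨-, b, c, d⟩ := inc_run t fun s hst => (ih s hst (by omega)).1
    rw [hs] at b c d
    have d0 := d 0
    rw [w_zero, w_zero] at d0
    have hn : nOf (P^[t] S) ≠ 0 := by omega
    exact ⟨increment_of_neg b hn (by omega), hn⟩

lemma final_state {S : State} (hs : sigma S = -1) (c : ℕ)
    (h : ∀ s < c, ruleOf (P^[s] S) = .increment) (h0 : nOf (P^[c] S) = 0) :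
    c = nOf S ∧ ∀ j, entry (P^[c] S) j = entry S j + w j (nOf S) := by
  obtain ⟨-, -, b, d⟩ := inc_run c h
  rw [hs] at b d
  refine ⟨by omega, fun j => ?_⟩
  rw [d, h0, w_at_zero]
  ring

/-- The entries of `N(E)` for an embanked state `E`, in terms of the state after the second
Halve rule. -/
lemma embanked_data {E : State} (h : Embanked E) : ∃ j₁ j₂, TwoHalves E j₁ j₂ ∧
    IsEmptyState (N E) ∧ ∀ j, entry (N E) j =
      entry (P^[j₂ + 1] E) j + w j (nOf (P^[j₂ + 1] E)) := by
  obtain ⟨hE, m, j₁, j₂, hm, h0, h12, h2m, r1, r2, hinc⟩ := h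
  have ht : TwoHalves E j₁ j₂ := ⟨h0, h12, r1, r2, fun t a b c =>
    hinc t a (by omega) c (by omega)⟩
  obtain ⟨-, hs, -⟩ := ht.profile hE (ht.one_le_ell hE)
  refine ⟨j₁, j₂, ht, ?_⟩
  rw [N_eq hm]
  refine ⟨hm.2.1, ?_⟩
  obtain ⟨c, rfl⟩ : ∃ c, m = c + (j₂ + 1) := ⟨m - (j₂ + 1), by omega⟩
  have hn := hm.2.1.2.1
  rw [Function.iterate_add_apply] at hn ⊢
  refine (final_state hs c (fun s hs => ?_) hn).2
  rw [← Function.iterate_add_apply]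
  exact hinc _ (by omega) (by omega) (by omega) (by omega)

/-- If after the second Halve rule the entry `a_0` is at least `n`, and the state reached when
`n = 0` does not halt, then `E` is embanked and that state is `N(E)`. -/
lemma TwoHalves.embanked {E : State} {j₁ j₂ : ℕ} (h : TwoHalves E j₁ j₂) (hE : IsEmptyState E)
    (hin : InTE E j₂) (h0 : (nOf (P^[j₂ + 1] E) : ℤ) ≤ entry (P^[j₂ + 1] E) 0)
    (hh : ∀ F : State, F.length = E.length →
      (∀ j, entry F j = entry (P^[j₂ + 1] E) j + w j (nOf (P^[j₂ + 1] E))) → ¬ HaltCond F) :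
    Embanked E ∧ (N E).length = E.length ∧
      ∀ j, entry (N E) j = entry (P^[j₂ + 1] E) j + w j (nOf (P^[j₂ + 1] E)) := by
  obtain ⟨hlen, hs, -⟩ := h.profile hE (h.one_le_ell hE)
  set S := P^[j₂ + 1] E with hS
  have hrun := final_run hs h0
  obtain ⟨a, b, c, -⟩ := inc_run (nOf S) fun t ht => (hrun t ht).1
  rw [hs] at b c
  have hn0 : nOf (P^[nOf S] S) = 0 := by omega
  have hent := (final_state hs _ (fun t ht => (hrun t ht).1) hn0).2
  have hF := hh _ (a.trans hlen) hent
  have hne : P^[nOf S] S ≠ [] := by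
    intro hc
    have := h.one_le_ell hE
    rw [hc, hlen] at a
    unfold ell at this
    simp at a
    omega
  have hrule : ruleOf (P^[nOf S] S) ≠ .halt := by
    intro hc
    unfold ruleOf at hc
    split_ifs at hc
  have hsplit : ∀ t, P^[t + (j₂ + 1)] E = P^[t] S := fun t => Function.iterate_add_apply _ _ _ _
  have hnext : NextEmptyAt E (nOf S + (j₂ + 1)) := by
    refine ⟨by omega, ?_, fun t ht0 htm hc => ?_⟩
    · rw [hsplit]; exact ⟨hne, hn0, b, hrule⟩
    · rcases Nat.lt_or_ge j₂ t with hlt | hge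
      · obtain ⟨u, rfl⟩ : ∃ u, t = u + (j₂ + 1) := ⟨t - (j₂ + 1), by omega⟩
        rw [hsplit] at hc
        exact (hrun u (by omega)).2 hc.2.1
      · exact hin t ht0 hge hc
  obtain ⟨p1, p2, r1, r2, hinc⟩ := h
  refine ⟨⟨hE, _, j₁, j₂, hnext, p1, p2, by omega, r1, r2, fun t t0 tm t1 t2 => ?_⟩, ?_⟩
  · rcases Nat.lt_or_ge j₂ t with hlt | hge
    · obtain ⟨u, rfl⟩ : ∃ u, t = u + (j₂ + 1) := ⟨t - (j₂ + 1), by omega⟩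
      rw [hsplit]
      exact (hrun u (by omega)).1
    · exact hinc t t0 (by omega) t1
  · rw [N_eq hnext, hsplit]
    exact ⟨a.trans hlen, hent⟩

/-! ### Comparing two profiles -/

lemma nu_le {m l : ℕ} (hm : m ≠ 0) (h : m < 2 ^ (l + 1)) : padicValNat 2 m ≤ l := by
  have h1 : 2 ^ padicValNat 2 m ≤ m := Nat.le_of_dvd (by omega) pow_padicValNat_dvd
  have h2 : 2 ^ padicValNat 2 m < 2 ^ (l + 1) := by omega
  have := (Nat.pow_lt_pow_iff_right (by norm_num : 1 < 2)).mp h2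
  omega

/-- Adding two to the entry `a_i` of an empty state adds two to exactly one entry of the next
one.  For `i = 0` both `s₁` drops by two and `h₁` by one while `h₂` is unchanged; for `i = 1`
the value `s₂` grows by two and `h₂` by one; for `i ≥ 2` no value changes. -/
lemma Profile.compare {l i h₁ h₂ h₁' h₂' : ℕ} {Z Z' H H' : ℕ → ℤ}
    (p : Profile l Z h₁ h₂ H) (p' : Profile l Z' h₁' h₂' H')
    (hZ : ∀ j, Z' j = Z j + if j = i then 2 else 0) (hi : i ≤ l) :
    ∃ k ≤ l, (i = 0 → k = padicValNat 2 h₁) ∧ (i = 1 → k = padicValNat 2 (h₂ + 1) + 1) ∧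
      (2 ≤ i → k = i - 2) ∧
      ∀ j, H' j + w j h₂' = H j + w j h₂ + if j = k then 2 else 0 := by
  have a0 := p.eq0
  have a0' := p'.eq0
  have a1 := p.eq1
  have a1' := p'.eq1
  rw [hZ] at a0' a1'
  simp only [w_zero] at a0 a0' a1 a1'
  push_cast at a0 a0' a1 a1'
  rcases i with _ | _ | i
  · have e1 : h₁ = h₁' + 1 := by simp only [if_true] at a0'; omega
    subst e1
    -- `s₁` passes `2h₁ + 1` and `2h₁`, which carry `a_1` and `a_{ν₂(h₁) + 2}`
    have hw : ∀ j, w (j + 1) (2 * (h₁' + 1) + 1) = w (j + 1) (2 * h₁' + 1) +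
        (if j = 0 then 1 else 0) + if padicValNat 2 (h₁' + 1) + 1 = j then 1 else 0 := by
      intro j
      rw [w_succ, show 2 * (h₁' + 1) = 2 * h₁' + 1 + 1 by ring, w_succ, wt, wt,
        show 2 * h₁' + 1 + 1 + 1 = 2 * (h₁' + 1) + 1 by ring, nu_odd,
        show 2 * h₁' + 1 + 1 = 2 * (h₁' + 1) by ring, nu_double (by omega)]
      simp only [Nat.add_eq_zero_iff, one_ne_zero, and_false, if_false, zero_add,
        Nat.add_right_cancel_iff]
      split_ifs <;> omega
    have e2 : h₂' = h₂ := by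
      have h1 := hw 0
      simp only [zero_add, if_true, Nat.add_eq_zero_iff, one_ne_zero, and_false, if_false] at h1
      simp only [one_ne_zero, if_false] at a1'
      push_cast at a1
      omega
    subst e2
    refine ⟨padicValNat 2 (h₁' + 1), ?_, fun _ => rfl, by omega, by omega, fun j => ?_⟩
    · refine nu_le (by omega) ?_
      have := p.down
      rw [pow_succ]
      omega
    · have h1 := hw (j + 1)
      have h2 := w_succ (j + 1) h₁'
      rw [wt] at h2
      rw [p.eqH, p'.eqH, hZ]
      rw [if_neg (by omega : j + 2 ≠ 0)]
      rw [show j + 1 + 1 = j + 2 from rfl] at h1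
      split_ifs at h1 h2 ⊢ <;> first | contradiction | omega
  · have e1 : h₁ = h₁' := by rw [if_neg (by omega)] at a0'; omega
    subst e1
    have e2 : h₂' = h₂ + 1 := by rw [if_pos rfl] at a1'; omega
    subst e2
    -- `s₂` passes `2h₂ + 1` and `2h₂ + 2`, which carry `a_1` and `a_{ν₂(h₂ + 1) + 2}`
    have hw : ∀ j, w (j + 1) (2 * (h₂ + 1)) = w (j + 1) (2 * h₂) +
        (if j = 0 then 1 else 0) + if j = padicValNat 2 (h₂ + 1) + 1 then 1 else 0 := by
      intro j
      rw [show 2 * (h₂ + 1) = 2 * h₂ + 1 + 1 by ring, w_succ, w_succ, wt, wt, nu_odd,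
        show 2 * h₂ + 1 + 1 = 2 * (h₂ + 1) by ring, nu_double (by omega)]
      simp only [Nat.add_eq_zero_iff, one_ne_zero, and_false, if_false, zero_add,
        Nat.add_right_cancel_iff]
      split_ifs <;> omega
    refine ⟨padicValNat 2 (h₂ + 1) + 1, ?_, by omega, fun _ => rfl, by omega, fun j => ?_⟩
    · have hb := p'.bound
      obtain ⟨n, rfl⟩ : ∃ n, l = n + 1 := ⟨l - 1, by omega⟩
      have := nu_le (m := h₂ + 1) (l := n) (by omega) (by rw [pow_succ] at hb; omega)
      omega
    · have h1 := hw j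
      have h2 := w_succ j h₂
      rw [wt] at h2
      rw [p.eqH, p'.eqH, hZ]
      have h3 : j + 2 ≠ 0 + 1 := by omega
      rw [if_neg h3]
      split_ifs at h1 h2 ⊢ <;> omega
  · have e1 : h₁ = h₁' := by rw [if_neg (by omega)] at a0'; omega
    subst e1
    have e2 : h₂' = h₂ := by rw [if_neg (by omega)] at a1'; omega
    subst e2
    refine ⟨i, by omega, by omega, by omega, by omega, fun j => ?_⟩
    rw [p.eqH, p'.eqH, hZ]
    simp only [Nat.add_right_cancel_iff, add_assoc, Nat.reduceAdd]
    ring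

/-! ### Assembling the states -/

lemma entry_bump (E : State) {i : ℕ} (hi : i < E.length) (j : ℕ) :
    entry (bump E i) j = entry E j + if j = i then 2 else 0 := by
  unfold bump
  rw [entry_set _ _ _ _ hi]
  split_ifs with h
  · subst h; rfl
  · ring

lemma ext_entry {S T : State} (hl : S.length = T.length) (h : ∀ j, entry S j = entry T j) :
    S = T := by
  refine List.ext_getElem hl fun j h1 h2 => ?_
  have := h j
  unfold entry at this
  rwa [List.getD_eq_getElem _ _ h1, List.getD_eq_getElem _ _ h2] at this

lemma haltCond_entry {S : State} (hl : 1 ≤ ell S) :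
    HaltCond S ↔ (∀ x ∈ S, Even x) ∧ entry S (ell S) = 0 ∧ entry S (ell S - 1) = 0 := by
  have h1 : S.getLastD 1 = entry S (ell S) := by
    unfold ell at *
    unfold entry
    rw [List.getLastD_eq_getLast?, List.getLast?_eq_getElem?, List.getD_eq_getElem?_getD,
      List.getElem?_eq_getElem (by omega)]
    rfl
  have h2 : S.dropLast.getLastD 1 = entry S (ell S - 1) := by
    unfold ell at *
    unfold entry
    rw [List.getLastD_eq_getLast?, List.getLast?_eq_getElem?, List.getD_eq_getElem?_getD,
      List.length_dropLast, List.getElem?_dropLast, if_pos (by omega),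
      List.getElem?_eq_getElem (by omega)]
    rfl
  unfold HaltCond
  rw [h1, h2]

/-- An entry other than `a_0` only grows between two Halve rules, so `a_j` of `N(E)` is
nonnegative if the entry `a_{j+2}` it comes from is.  For the two leftmost entries of `N(E)` the
latter is one of the two zeros created by the Zero rule. -/
lemma Profile.nonneg {l h₁ h₂ j : ℕ} {Z H : ℕ → ℤ} (p : Profile l Z h₁ h₂ H) (hj : j ≠ 0)
    (hZ : 0 ≤ Z (j + 2)) : 0 ≤ H j + w j h₂ := by
  rw [p.eqH]
  have a := w_mono (j := j + 2) (by omega) p.down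
  have b := w_mono (j := j + 1) (by omega) p.up
  have c := w_mono hj (Nat.zero_le h₂)
  rw [w_at_zero] at c
  linarith

lemma entry_large (E : State) {j : ℕ} (h : E.length ≤ j) : entry E j = 0 := by
  simp [entry, List.getD_eq_getElem?_getD, h]

/-- Let `E` be an embanked state with `N(E) = E[i]` for some `i ∈ [0, ℓ(E)]`,
and suppose `N(E)` is weakly embanked.  Then `N(E)` is embanked, and `N(N(E))` equals
`N(E)[ν₂(h₁)]` if `i = 0`, `N(E)[ν₂(h₂+1)+1]` if `i = 1`, and `N(E)[i-2]` if `i ≥ 2`,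
where `h(E) = (h₁, h₂)`. -/
theorem statement_9 (E : State) (i : ℕ) (hE : Embanked E) (hi : i ≤ ell E)
    (hN : N E = bump E i) (hw : WeaklyEmbanked (N E)) :
    Embanked (N E) ∧
    (i = 0 → N (N E) = bump (N E) (padicValNat 2 (hVal E 1))) ∧
    (i = 1 → N (N E) = bump (N E) (padicValNat 2 (hVal E 2 + 1) + 1)) ∧
    (2 ≤ i → N (N E) = bump (N E) (i - 2)) := by
  obtain ⟨j₁, j₂, ht, hE', hent⟩ := embanked_data hE
  obtain ⟨-, k₁, k₂, a1, a2, hin, a3, a4, a5⟩ := hw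
  have ht' : TwoHalves (N E) k₁ k₂ := ⟨a1, a2, a3, a4, a5⟩
  have hl := ht.one_le_ell hE.1
  have hlenE : E.length = ell E + 1 := by unfold ell at hl ⊢; omega
  have hlen : (N E).length = E.length := by rw [hN]; simp [bump]
  have hell : ell (N E) = ell E := by unfold ell; rw [hlen]
  obtain ⟨-, -, p⟩ := ht.profile hE.1 hl
  obtain ⟨-, -, p'⟩ := ht'.profile hE' (by omega)
  rw [hell] at p'
  obtain ⟨v1, v2⟩ := ht.hVal hE.1
  have hz := (zero_step hE.1 hl).2.2.2
  have hz' := (zero_step hE' (by omega)).2.2.2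
  have hNent : ∀ j, entry (N E) j = entry E j + if j = i then 2 else 0 := by
    intro j; rw [hN]; exact entry_bump E (by omega) j
  obtain ⟨k, hk, c0, c1, c2, hc⟩ := p.compare p' (i := i) (fun j => by
    rw [hz, hz', hNent, hell]; ring) hi
  have hF : ∀ j, entry (P^[k₂ + 1] (N E)) j + w j (nOf (P^[k₂ + 1] (N E))) =
      entry (N E) j + if j = k then 2 else 0 := fun j => by rw [hc, ← hent]
  -- the first run of Increments stops at `a_0 = -1`, so it starts with `a_0 ≥ -1`
  have h00 : 0 ≤ entry (N E) 0 := by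
    have := p'.start
    rw [hz', hell, if_neg (by omega)] at this
    simp at this
    linarith
  have hpos : ∀ j, ell E - 1 ≤ j → 0 ≤ entry (N E) j := by
    intro j hj
    rcases Nat.eq_zero_or_pos j with rfl | hj0
    · exact h00
    · rw [hent]
      refine p.nonneg (by omega) ?_
      rw [hz, entry_large E (by omega), if_neg (by omega), if_neg (by omega)]
      norm_num
  have main := ht'.embanked hE' hin (by
      have h1 := hF 0
      rw [w_zero] at h1
      split_ifs at h1 <;> linarith) (by
      intro F hFl hFe hH
      have hellF : ell F = ell E := by unfold ell; rw [hFl, hlen]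
      obtain ⟨-, q1, q2⟩ := (haltCond_entry (by omega)).mp hH
      apply empty_not_halt hE'
      rw [haltCond_entry (by omega), hell]
      rw [hellF, hFe, hF] at q1 q2
      have r1 := hpos (ell E) (by omega)
      have r2 := hpos (ell E - 1) le_rfl
      refine ⟨empty_all_even hE', ?_, ?_⟩
      · split_ifs at q1 <;> linarith
      · split_ifs at q2 <;> linarith)
  obtain ⟨m1, m2, m3⟩ := main
  have hfin : N (N E) = bump (N E) k := by
    refine ext_entry (by simp [m2, bump]) fun j => ?_
    rw [m3, hF, entry_bump _ (by omega)]
  refine ⟨m1, fun h => ?_, fun h => ?_, fun h => ?_⟩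
  · rw [hfin, v1, c0 h]
  · rw [hfin, v2, c1 h]
  · rw [hfin, c2 h]

end Skelet17
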